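/- Let Ω ⊆ ℝⁿ be an open domain, let M, P, Q satisfy conditions (M) and (Y) with P and Q additionally being N-functions, and let μ satisfy condition (μ). Assume the Hardy-type inequality (H1): there are constants K₁, K₂, A > 0 such that ∫_Ω P(|∇φ|·|u|) dμ ≤ K₁·∫_Ω P(A·|∇u|) dμ + K₂·∫_Ω M(|u|) dμ for every u ∈ C₀^∞(Ω). Then there exist constants L₁, L₂ > 0 (one may take L₁ = 2(L+2)√B and L₂ = 2(L+2)B, where L, B are the constants from the corresponding modular inequality) such that for every u ∈ C₀^∞(Ω): ‖∇u‖_{L^M(Ω,μ)} ≤ L₁·√( ‖∇⁽²⁾u‖_{L^P(Ω,μ)} · ‖u‖_{L^Q(Ω,μ)} ) + L₂·‖u‖_{L^Q(Ω,μ)}. -/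

import Mathlib

/-!
The heart of the matter is the modular inequality
`∫ M(|∇u|) ≤ L (∫ P(Bσ|∇⁽²⁾u|) + ∫ Q(B|u|/σ))`, valid for every `σ ∈ (0, 1]` with `L`, `B`
independent of `u` and `σ` (`modular`).

Write `M(|∇u|) = (M(|∇u|)/|∇u|²) ∇u · ∇u` and integrate by parts against `e^{-φ}` (`ibp`). Two terms
appear: one with the divergence of the field `(M(|∇u|)/|∇u|²) ∇u`, which by convexity and the
Δ₂-condition is `O((M(|∇u|)/|∇u|²) |∇⁽²⁾u|)` (`abs_deriv_nu_le`, `abs_pd_fieldC_le`), and one with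
`∇φ · ∇u`. The Young-type inequality, with a weight `θ` moved between the factors `v` and `w`, bounds
both by `θ M(|∇u|)` plus `P`- and `Q`-terms (`step_delta`). The term `P(|∇φ||∇u|)` is handled by the
Hardy-type inequality for the partial derivatives of `u` (`hardy_step`), and all the `M`-terms are
absorbed on the left when `θ` is small.

The field need not be differentiable where `∇u = 0`, so the computation is made with
`r² = |∇u|² + δ` in place of `|∇u|²`: that field is `C¹`, every estimate is uniform in `δ`, and
`δ → 0` by dominated convergence (`step_limit`). All integrals are finite because `u` has compact
support in `Ω`, where `e^{-φ}` and `∇φ` are locally bounded.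

For the norms, let `a` and `b` be admissible in the Luxemburg norms of `∇⁽²⁾u` and `u`. The modular
inequality for `u/T` with `T = B(√(ab) + b)` and `σ = √b/(√a + √b)` makes the right-hand side at most
`2L`, and convexity of `M` turns this into `‖∇u‖_M ≤ (1 + 2L) T`. Finally `a` and `b` tend to the
respective infima.
-/

open MeasureTheory Filter Set

noncomputable section

/-- `E n` is the Euclidean space `ℝⁿ`. -/
abbrev E (n : ℕ) := EuclideanSpace ℝ (Fin n)

/-- An `N`-function: a continuous convex function `M : [0,∞) → [0,∞)` with `M(0) = 0`,
`lim_{λ→0} M(λ)/λ = 0` and `lim_{λ→∞} λ/M(λ) = 0`. -/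
def IsNFunction (M : ℝ → ℝ) : Prop :=
  ContinuousOn M (Ici 0) ∧ ConvexOn ℝ (Ici 0) M ∧ M 0 = 0 ∧
  (∀ x ≥ (0:ℝ), 0 ≤ M x) ∧
  Tendsto (fun l => M l / l) (nhdsWithin 0 (Ioi 0)) (nhds 0) ∧
  Tendsto (fun l => l / M l) atTop (nhds 0)

/-- The Δ₂-condition. -/
def Delta2 (M : ℝ → ℝ) : Prop := ∃ c > 0, ∀ l > (0:ℝ), M (2 * l) ≤ c * M l

/-- Condition (M): `M` is an `N`-function of class `C¹` on `(0,∞)` satisfying the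
Δ₂-condition and such that `M'(λ)/λ` is bounded near zero. -/
def CondM (M : ℝ → ℝ) : Prop :=
  IsNFunction M ∧ ContDiffOn ℝ 1 M (Ioi 0) ∧ Delta2 M ∧
  ∃ ε > (0:ℝ), ∃ C : ℝ, ∀ l ∈ Ioo (0:ℝ) ε, deriv M l / l ≤ C

/-- Condition (Y): `P, Q` are nonnegative nondecreasing measurable functions vanishing at `0`
such that the Young-type inequality `(M(u)/u²)·v·w ≤ M(u) + P(v) + Q(w)` holds. -/
def CondY (M P Q : ℝ → ℝ) : Prop :=
  Measurable P ∧ Measurable Q ∧ (∀ x ≥ (0:ℝ), 0 ≤ P x) ∧ (∀ x ≥ (0:ℝ), 0 ≤ Q x) ∧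
  MonotoneOn P (Ici 0) ∧ MonotoneOn Q (Ici 0) ∧ P 0 = 0 ∧ Q 0 = 0 ∧
  ∀ u > (0:ℝ), ∀ v > (0:ℝ), ∀ w > (0:ℝ), M u / u ^ 2 * v * w ≤ M u + P v + Q w

/-- `φ` is locally Lipschitz on `Ω`. -/
def LocLipschitzOn {α : Type*} [MetricSpace α] (Ω : Set α) (φ : α → ℝ) : Prop :=
  ∀ x ∈ Ω, ∃ s ∈ nhdsWithin x Ω, ∃ K : NNReal, LipschitzOnWith K φ s

/-- The measure `μ(dx) = e^{-φ(x)} dx` on the domain `Ω`. -/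
def measOf {n : ℕ} (Ω : Set (E n)) (φ : E n → ℝ) : Measure (E n) :=
  (volume.restrict Ω).withDensity fun x => ENNReal.ofReal (Real.exp (-φ x))

/-- `u ∈ C₀^∞(Ω)`: smooth and compactly supported inside `Ω`. -/
def TestFun {n : ℕ} (Ω : Set (E n)) (u : E n → ℝ) : Prop :=
  ContDiff ℝ (⊤ : ℕ∞) u ∧ HasCompactSupport u ∧ tsupport u ⊆ Ω

/-- The Hilbert–Schmidt norm of the Hessian of `u` at `x`. -/
def hessNormHS {n : ℕ} (u : E n → ℝ) (x : E n) : ℝ :=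
  Real.sqrt (∑ i : Fin n, ∑ j : Fin n,
    (iteratedFDeriv ℝ 2 u x ![EuclideanSpace.single i (1:ℝ), EuclideanSpace.single j (1:ℝ)]) ^ 2)

/-- The Luxemburg norm `‖f‖_{L^R(μ)} = inf {K > 0 : ∫ R(|f|/K) dμ ≤ 1}`. -/
def luxNorm {α : Type*} [MeasurableSpace α] (R : ℝ → ℝ) (μ : Measure α) (f : α → ℝ) : ℝ :=
  sInf {K : ℝ | 0 < K ∧ ∫ x, R (|f x| / K) ∂μ ≤ 1}

/-! ### Properties of N-functions -/

lemma IsNFunction.smul_le {M : ℝ → ℝ} (hM : IsNFunction M) {s t : ℝ} (hs0 : 0 ≤ s)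
    (hs1 : s ≤ 1) (ht : 0 ≤ t) : M (s * t) ≤ s * M t := by
  obtain ⟨-, hc, h0, -⟩ := hM
  have := hc.2 (x := t) (y := 0) ht (by simp) hs0 (sub_nonneg.2 hs1) (by ring)
  simpa [h0] using this

lemma IsNFunction.mono {M : ℝ → ℝ} (hM : IsNFunction M) {s t : ℝ} (hs : 0 ≤ s)
    (hst : s ≤ t) : M s ≤ M t := by
  rcases hs.eq_or_lt with rfl | hs
  · rw [hM.2.2.1]; exact hM.2.2.2.1 t hst
  · have ht : 0 < t := hs.trans_le hst
    have h := hM.smul_le (div_nonneg hs.le ht.le) ((div_le_one ht).2 hst) ht.le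
    rw [div_mul_cancel₀ _ ht.ne'] at h
    have h2 : s / t * M t ≤ 1 * M t :=
      mul_le_mul_of_nonneg_right ((div_le_one ht).2 hst) (hM.2.2.2.1 t ht.le)
    linarith

lemma IsNFunction.continuous_comp {X : Type*} [TopologicalSpace X] {M : ℝ → ℝ}
    (hM : IsNFunction M) {f : X → ℝ} (hf : Continuous f) (h0 : ∀ x, 0 ≤ f x) :
    Continuous fun x => M (f x) :=
  hM.1.comp_continuous hf h0

/-- The radial profile `M(√t)/t` of the field `M(|p|)/|p|² · p`, as a function of `t = |p|²`. -/
def nu (M : ℝ → ℝ) (t : ℝ) : ℝ := M (√t) / t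

lemma nu_nonneg {M : ℝ → ℝ} (hM : IsNFunction M) {t : ℝ} (ht : 0 ≤ t) : 0 ≤ nu M t :=
  div_nonneg (hM.2.2.2.1 _ (Real.sqrt_nonneg _)) ht

lemma nu_contDiffOn {M : ℝ → ℝ} (hM : ContDiffOn ℝ 1 M (Ioi 0)) :
    ContDiffOn ℝ 1 (nu M) (Ioi 0) := by
  have h1 : ContDiffOn ℝ 1 Real.sqrt (Ioi 0) := fun t ht =>
    (Real.contDiffAt_sqrt (ne_of_gt ht)).contDiffWithinAt
  refine (hM.comp h1 fun t ht => Real.sqrt_pos.2 ht).div contDiffOn_id fun t ht => ne_of_gt ht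

/-- Convexity gives `M(r) ≤ r M'(r)` (tangent at `r`, evaluated at `0`) and the Δ₂-condition gives
`r M'(r) ≤ (c - 1) M(r)` (tangent at `r`, evaluated at `2r`); hence `|t ν'(t)| ≲ ν(t)`. -/
lemma abs_deriv_nu_le {M : ℝ → ℝ} (hM : IsNFunction M) (hC : ContDiffOn ℝ 1 M (Ioi 0))
    {c : ℝ} (hD : ∀ l > (0:ℝ), M (2 * l) ≤ c * M l) {t : ℝ} (ht : 0 < t) :
    |deriv (nu M) t| ≤ (c / 2 + 1) * (nu M t / t) := by
  set r := √t with hr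
  have hr0 : 0 < r := Real.sqrt_pos.2 ht
  have hrt : r * r = t := Real.mul_self_sqrt ht.le
  have hd : HasDerivAt M (deriv M r) r :=
    ((hC.differentiableOn one_ne_zero).differentiableAt (Ioi_mem_nhds hr0)).hasDerivAt
  have hMr : 0 ≤ M r := hM.2.2.2.1 _ hr0.le
  have l1 : M r ≤ r * deriv M r := by
    have := hM.2.1.slope_le_of_hasDerivAt (x := 0) (y := r) (by simp) hr0.le hr0 hd
    rw [slope_def_field, hM.2.2.1, sub_zero, sub_zero, div_le_iff₀ hr0] at this
    linarith
  have l2 : r * deriv M r ≤ c * M r := by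
    have := hM.2.1.le_slope_of_hasDerivAt (x := r) (y := 2 * r) hr0.le
      (by simp [hr0.le]) (by linarith) hd
    rw [slope_def_field, show 2 * r - r = r by ring, le_div_iff₀ hr0] at this
    have := hD r hr0
    linarith
  have hder : HasDerivAt (nu M)
      ((deriv M r * (1 / (2 * √t)) * t - M (√t) * 1) / t ^ 2) t := by
    have h1 := Real.hasDerivAt_sqrt ht.ne'
    exact ((hd.comp t h1).div (hasDerivAt_id t) ht.ne')
  rw [hder.deriv, ← hr]
  have e : (deriv M r * (1 / (2 * r)) * t - M r * 1) / t ^ 2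
      = (r * deriv M r / 2 - M r) / t ^ 2 := by
    congr 1
    rw [← hrt]; field_simp
  have e2 : nu M t / t = M r / t ^ 2 := by rw [nu, ← hr, div_div, sq]
  rw [e, e2, abs_div, abs_of_pos (by positivity : 0 < t ^ 2), ← mul_div_assoc]
  gcongr
  rw [abs_le]
  constructor <;> nlinarith

/-! ### Integration with respect to `e^{-φ} dx` -/

section meas
variable {n : ℕ} {Ω : Set (E n)} {φ : E n → ℝ}

lemma LocLipschitzOn.loc (hφ : LocLipschitzOn Ω φ) : LocallyLipschitzOn Ω φ := by
  intro x hx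
  obtain ⟨s, hs, K, hK⟩ := hφ x hx
  exact ⟨K, s, hs, hK⟩

lemma aemeasurable_density (hΩ : IsOpen Ω) (hφ : LocLipschitzOn Ω φ) :
    AEMeasurable (fun x => ENNReal.ofReal (Real.exp (-φ x))) (volume.restrict Ω) :=
  ENNReal.measurable_ofReal.comp_aemeasurable
    (Real.measurable_exp.comp_aemeasurable
      (hφ.loc.continuousOn.aemeasurable hΩ.measurableSet).neg)

lemma integral_measOf (hΩ : IsOpen Ω) (hφ : LocLipschitzOn Ω φ) (f : E n → ℝ) :
    ∫ x, f x ∂(measOf Ω φ) = ∫ x in Ω, Real.exp (-φ x) * f x := by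
  rw [measOf, integral_withDensity_eq_integral_toReal_smul₀ (aemeasurable_density hΩ hφ)
    (by simp)]
  simp [ENNReal.toReal_ofReal, (Real.exp_pos _).le]

lemma measOf_ac : measOf Ω φ ≪ volume.restrict Ω := withDensity_absolutelyContinuous _ _

lemma measOf_compact_lt_top (hφ : LocLipschitzOn Ω φ) {K : Set (E n)} (hK : IsCompact K)
    (hKΩ : K ⊆ Ω) : measOf Ω φ K < ⊤ := by
  rw [measOf, withDensity_apply _ hK.measurableSet, Measure.restrict_restrict hK.measurableSet,
    inter_eq_left.2 hKΩ]
  obtain ⟨C, hC⟩ := hK.exists_bound_of_continuousOn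
    (f := fun x => Real.exp (-φ x)) ((hφ.loc.continuousOn.mono hKΩ).neg.rexp)
  refine (setLIntegral_mono' (g := fun _ => ENNReal.ofReal C) hK.measurableSet
    fun x hx => ENNReal.ofReal_le_ofReal ((le_abs_self _).trans (hC x hx))).trans_lt ?_
  rw [setLIntegral_const]
  exact ENNReal.mul_lt_top ENNReal.ofReal_lt_top hK.measure_lt_top

lemma integrable_of_bdd (hφ : LocLipschitzOn Ω φ) {K : Set (E n)} (hK : IsCompact K)
    (hKΩ : K ⊆ Ω) {f : E n → ℝ} (hf : AEStronglyMeasurable f (measOf Ω φ)) {C : ℝ}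
    (hC : ∀ᵐ x ∂(measOf Ω φ), x ∈ K → |f x| ≤ C) (h0 : ∀ x, x ∉ K → f x = 0) :
    Integrable f (measOf Ω φ) := by
  rw [← integrableOn_iff_integrable_of_support_subset
    (s := K) (fun x hx => by_contra fun h => hx (h0 x h))]
  exact Measure.integrableOn_of_bounded (measOf_compact_lt_top hφ hK hKΩ).ne hf
    ((ae_restrict_iff' hK.measurableSet).2 hC)

lemma integrable_of_cont (hφ : LocLipschitzOn Ω φ) {K : Set (E n)} (hK : IsCompact K)
    (hKΩ : K ⊆ Ω) {f : E n → ℝ} (hf : Continuous f) (h0 : ∀ x, x ∉ K → f x = 0) :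
    Integrable f (measOf Ω φ) := by
  obtain ⟨C, hC⟩ := hK.exists_bound_of_continuousOn hf.continuousOn
  exact integrable_of_bdd hφ hK hKΩ hf.aestronglyMeasurable (ae_of_all _ hC) h0

lemma integrable_indicator (hφ : LocLipschitzOn Ω φ) {K : Set (E n)} (hK : IsCompact K)
    (hKΩ : K ⊆ Ω) {f : E n → ℝ} (hf : Continuous f) :
    Integrable (K.indicator f) (measOf Ω φ) := by
  obtain ⟨C, hC⟩ := hK.exists_bound_of_continuousOn hf.continuousOn
  refine integrable_of_bdd hφ hK hKΩ (hf.aestronglyMeasurable.indicator hK.measurableSet)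
    (C := C) (ae_of_all _ fun x hx => ?_) fun x hx => indicator_of_notMem hx _
  rw [indicator_of_mem hx]; exact hC x hx

variable {φ' : E n → E n}

/-- A locally Lipschitz weight has essentially bounded gradient on compact subsets. -/
lemma grad_bdd (hΩ : IsOpen Ω) (hφ : LocLipschitzOn Ω φ)
    (hφ' : ∀ᵐ x ∂(volume.restrict Ω), HasGradientAt φ (φ' x) x) {K : Set (E n)}
    (hK : IsCompact K) (hKΩ : K ⊆ Ω) :
    ∃ C : ℝ, ∀ᵐ x ∂(measOf Ω φ), x ∈ K → ‖φ' x‖ ≤ C := by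
  obtain ⟨K', hK', h1, h2⟩ := exists_compact_between hK hΩ hKΩ
  obtain ⟨k, hk⟩ := (hφ.loc.mono h2).exists_lipschitzOnWith_of_compact hK'
  refine ⟨k, ?_⟩
  filter_upwards [measOf_ac.ae_le hφ'] with x hx hxK
  have := HasFDerivAt.le_of_lipschitzOn hx.hasFDerivAt
    (mem_interior_iff_mem_nhds.1 (h1 hxK)) hk
  simpa using this

lemma aemeasurable_grad
    (hφ' : ∀ᵐ x ∂(volume.restrict Ω), HasGradientAt φ (φ' x) x) :
    AEMeasurable φ' (measOf Ω φ) := by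
  refine ⟨fun x => gradient φ x, ?_, ?_⟩
  · exact (InnerProductSpace.toDual ℝ (E n)).symm.continuous.measurable.comp
      (measurable_fderiv ℝ φ)
  · filter_upwards [measOf_ac.ae_le hφ'] with x hx using hx.gradient.symm

/-- Integration by parts against `e^{-φ}`. Near the support of `h` the weight `e^{-φ}` agrees with
a globally Lipschitz function, to which integration by parts for Lipschitz functions applies. -/
lemma ibp (hΩ : IsOpen Ω) (hφ : LocLipschitzOn Ω φ)
    (hφ' : ∀ᵐ x ∂(volume.restrict Ω), HasGradientAt φ (φ' x) x) {h : E n → ℝ}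
    (hh : ContDiff ℝ 1 h) (hc : HasCompactSupport h) (hs : tsupport h ⊆ Ω) (v : E n) :
    ∫ x, fderiv ℝ h x v ∂(measOf Ω φ) = ∫ x, h x * inner ℝ (φ' x) v ∂(measOf Ω φ) := by
  obtain ⟨K', hK', h1, h2⟩ := exists_compact_between hc hΩ hs
  obtain ⟨k, hk⟩ := (hφ.loc.mono h2).neg.exists_lipschitzOnWith_of_compact hK'
  obtain ⟨k', hk'⟩ := ((Real.contDiff_exp (n := 1)).locallyLipschitz.locallyLipschitzOn
    (s := Set.image (-φ) K')).exists_lipschitzOnWith_of_compact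
      (hK'.image_of_continuousOn hk.continuousOn)
  obtain ⟨f, hf, hfe⟩ := (hk'.comp hk (mapsTo_image _ _)).extend_real
  obtain ⟨D, hD⟩ := hh.lipschitzWith_of_hasCompactSupport hc one_ne_zero
  have key := hf.integral_lineDeriv_mul_eq (μ := volume) hD hc v
  rw [integral_measOf hΩ hφ, integral_measOf hΩ hφ]
  have hnear : ∀ x ∈ tsupport h, f =ᶠ[nhds x] fun y => Real.exp (-φ y) := fun x hx => by
    filter_upwards [mem_interior_iff_mem_nhds.1 (h1 hx)] with y hy
    exact (hfe hy).symm
  have hz : ∀ x, x ∉ tsupport h → fderiv ℝ h x = 0 := fun x hx =>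
    image_eq_zero_of_notMem_tsupport (fun hx' => hx (tsupport_fderiv_subset ℝ hx'))
  have hzz : ∀ x, x ∉ tsupport h → h x = 0 := fun x hx => image_eq_zero_of_notMem_tsupport hx
  have hL : ∫ x, lineDeriv ℝ f x v * h x = -∫ x in Ω, Real.exp (-φ x) * (h x * inner ℝ (φ' x) v) := by
    rw [← integral_neg, ← setIntegral_eq_integral_of_forall_compl_eq_zero (s := Ω)
      (fun x hx => by rw [hzz x (fun h => hx (hs h)), mul_zero])]
    refine integral_congr_ae ?_
    filter_upwards [hφ'] with x hx
    by_cases hxs : x ∈ tsupport h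
    · have hd : HasFDerivAt f (Real.exp (-φ x) • (-(InnerProductSpace.toDual ℝ (E n) (φ' x)))) x :=
        (hx.hasFDerivAt.neg.exp).congr_of_eventuallyEq (hnear x hxs)
      rw [hd.hasLineDerivAt v |>.lineDeriv]
      simp
      ring
    · simp [hzz x hxs]
  have hR : ∫ x, lineDeriv ℝ h x (-v) * f x = -∫ x in Ω, Real.exp (-φ x) * fderiv ℝ h x v := by
    have hl : ∀ x, lineDeriv ℝ h x (-v) = -fderiv ℝ h x v := fun x => by
      rw [(hh.differentiable one_ne_zero x).lineDeriv_eq_fderiv, map_neg]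
    simp_rw [hl]
    rw [← integral_neg, ← setIntegral_eq_integral_of_forall_compl_eq_zero (s := Ω)
      (fun x hx => by rw [hz x (fun h => hx (hs h))]; simp)]
    refine setIntegral_congr_fun hΩ.measurableSet fun x hx => ?_
    by_cases hxs : x ∈ tsupport h
    · simp only [(hnear x hxs).eq_of_nhds]; ring
    · simp [hz x hxs]
  rw [hL, hR] at key
  linarith

end meas

/-! ### Partial derivatives, gradient and Hessian -/

section test
variable {n : ℕ} {Ω : Set (E n)} {u : E n → ℝ}

/-- The partial derivative `∂ᵢu`. -/
def pd (u : E n → ℝ) (i : Fin n) (x : E n) : ℝ := fderiv ℝ u x (EuclideanSpace.single i 1)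

lemma pd_contDiff (hu : ContDiff ℝ (⊤ : ℕ∞) u) (i : Fin n) :
    ContDiff ℝ (⊤ : ℕ∞) (pd u i) :=
  (hu.fderiv_right (m := (⊤ : ℕ∞)) (by simp)).clm_apply contDiff_const

lemma gradient_apply (u : E n → ℝ) (x : E n) (i : Fin n) : gradient u x i = pd u i x := by
  have : inner ℝ (gradient u x) (EuclideanSpace.single i (1:ℝ)) = pd u i x := by
    rw [pd, ← toDual_gradient]; simp
  rw [← this, EuclideanSpace.inner_single_right]; simp

lemma norm_gradient (u : E n → ℝ) (x : E n) :
    ‖gradient u x‖ = √(∑ i, pd u i x ^ 2) := by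
  simp [EuclideanSpace.norm_eq, gradient_apply]

lemma hessNormHS_eq (hu : ContDiff ℝ (⊤ : ℕ∞) u) (x : E n) :
    hessNormHS u x = √(∑ i, ∑ j, pd (pd u j) i x ^ 2) := by
  have hd : DifferentiableAt ℝ (fderiv ℝ u) x :=
    (hu.fderiv_right (m := (⊤ : ℕ∞)) (by simp)).differentiable (by simp) x
  have : ∀ i j : Fin n, iteratedFDeriv ℝ 2 u x
      ![EuclideanSpace.single i (1:ℝ), EuclideanSpace.single j (1:ℝ)] = pd (pd u j) i x := by
    intro i j
    rw [iteratedFDeriv_two_apply]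
    have : fderiv ℝ (pd u j) x = (fderiv ℝ (fderiv ℝ u) x).flip (EuclideanSpace.single j 1) := by
      have := (hd.hasFDerivAt.clm_apply (hasFDerivAt_const (EuclideanSpace.single j (1:ℝ)) x)).fderiv
      have e : pd u j = fun y => fderiv ℝ u y (EuclideanSpace.single j 1) := rfl
      rw [e]; simpa using this
    rw [pd, this]; simp
  simp [hessNormHS, this]

lemma hess_nonneg (u : E n → ℝ) (x : E n) : 0 ≤ hessNormHS u x := Real.sqrt_nonneg _

lemma abs_pd_pd_le (hu : ContDiff ℝ (⊤ : ℕ∞) u) (x : E n) (i j : Fin n) :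
    |pd (pd u j) i x| ≤ hessNormHS u x := by
  rw [hessNormHS_eq hu]
  apply Real.abs_le_sqrt
  refine le_trans ?_ (Finset.single_le_sum (f := fun i => ∑ j, pd (pd u j) i x ^ 2)
    (fun i _ => by positivity) (Finset.mem_univ i))
  exact Finset.single_le_sum (f := fun j => pd (pd u j) i x ^ 2)
    (fun i _ => by positivity) (Finset.mem_univ j)

lemma norm_gradient_pd_le (hu : ContDiff ℝ (⊤ : ℕ∞) u) (x : E n) (j : Fin n) :
    ‖gradient (pd u j) x‖ ≤ hessNormHS u x := by
  rw [hessNormHS_eq hu, norm_gradient]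
  apply Real.sqrt_le_sqrt
  exact Finset.sum_le_sum fun i _ => Finset.single_le_sum (f := fun j => pd (pd u j) i x ^ 2)
    (fun i _ => by positivity) (Finset.mem_univ j)

lemma abs_pd_le (u : E n → ℝ) (x : E n) (j : Fin n) : |pd u j x| ≤ ‖gradient u x‖ := by
  rw [norm_gradient]
  exact Real.abs_le_sqrt (Finset.single_le_sum (f := fun j => pd u j x ^ 2)
    (fun i _ => by positivity) (Finset.mem_univ j))

lemma norm_gradient_le_sum (u : E n → ℝ) (x : E n) :
    ‖gradient u x‖ ≤ ∑ i, |pd u i x| := by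
  rw [norm_gradient]
  apply Real.sqrt_le_iff.2 ⟨by positivity, ?_⟩
  simpa using Finset.sum_sq_le_sq_sum_of_nonneg (s := Finset.univ) (f := fun i => |pd u i x|) (fun i _ => abs_nonneg _)

lemma continuous_norm_gradient (hu : ContDiff ℝ (⊤ : ℕ∞) u) :
    Continuous fun x => ‖gradient u x‖ := by
  simp_rw [norm_gradient]
  have := fun i => (pd_contDiff hu i).continuous
  fun_prop

lemma continuous_hess (hu : ContDiff ℝ (⊤ : ℕ∞) u) : Continuous (hessNormHS u) := by
  rw [show hessNormHS u = _ from funext fun x => hessNormHS_eq hu x]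
  have := fun i j => (pd_contDiff (pd_contDiff hu j) i).continuous
  fun_prop

lemma tsupport_pd (u : E n → ℝ) (i : Fin n) : tsupport (pd u i) ⊆ tsupport u :=
  tsupport_fderiv_apply_subset ℝ _

lemma pd_zero_off {x : E n} (hx : x ∉ tsupport u) (i : Fin n) : pd u i x = 0 :=
  image_eq_zero_of_notMem_tsupport fun h => hx (tsupport_pd u i h)

lemma norm_gradient_zero_off {x : E n} (hx : x ∉ tsupport u) : ‖gradient u x‖ = 0 := by
  simp [norm_gradient, pd_zero_off hx]

lemma hess_zero_off (hu : ContDiff ℝ (⊤ : ℕ∞) u) {x : E n} (hx : x ∉ tsupport u) :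
    hessNormHS u x = 0 := by
  rw [hessNormHS_eq hu]
  simp [pd_zero_off fun h => hx (tsupport_pd u _ h)]

lemma TestFun.const_mul (hu : TestFun Ω u) (c : ℝ) : TestFun Ω (fun x => c * u x) := by
  obtain ⟨h1, h2, h3⟩ := hu
  exact ⟨contDiff_const.mul h1, h2.mul_left, (tsupport_mul_subset_right).trans h3⟩

lemma TestFun.pd (hu : TestFun Ω u) (i : Fin n) : TestFun Ω (pd u i) :=
  ⟨pd_contDiff hu.1 i, hu.2.1.mono' (subset_closure.trans (tsupport_pd u i)),
    (tsupport_pd u i).trans hu.2.2⟩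

lemma pd_const_mul (hu : ContDiff ℝ (⊤ : ℕ∞) u) (c : ℝ) (i : Fin n) :
    pd (fun x => c * u x) i = fun x => c * pd u i x := by
  funext x
  have : DifferentiableAt ℝ u x := hu.differentiable (by simp) x
  simp [_root_.pd, fderiv_const_mul this]

lemma norm_gradient_const_mul (hu : ContDiff ℝ (⊤ : ℕ∞) u) (c : ℝ) (x : E n) :
    ‖gradient (fun x => c * u x) x‖ = |c| * ‖gradient u x‖ := by
  simp_rw [norm_gradient, pd_const_mul hu, mul_pow, ← Finset.mul_sum]
  rw [Real.sqrt_mul (sq_nonneg c), Real.sqrt_sq_eq_abs]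

lemma hess_const_mul (hu : ContDiff ℝ (⊤ : ℕ∞) u) (c : ℝ) (x : E n) :
    hessNormHS (fun x => c * u x) x = |c| * hessNormHS u x := by
  rw [hessNormHS_eq hu, hessNormHS_eq (contDiff_const.mul hu)]
  simp_rw [pd_const_mul hu, pd_const_mul (pd_contDiff hu _), mul_pow, ← Finset.mul_sum]
  rw [Real.sqrt_mul (sq_nonneg c), Real.sqrt_sq_eq_abs]

end test

/-! ### The regularised field -/

section modular
variable {n : ℕ} {Ω : Set (E n)} {φ : E n → ℝ} {φ' : E n → E n} {u : E n → ℝ}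
  {M P Q : ℝ → ℝ}

/-- The regularised squared gradient `|∇u|² + δ`. -/
def tq (u : E n → ℝ) (δ : ℝ) (x : E n) : ℝ := ∑ i, pd u i x ^ 2 + δ

lemma tq_pos {δ : ℝ} (hδ : 0 < δ) (x : E n) : 0 < tq u δ x := by
  unfold tq; positivity

lemma tq_contDiff (hu : ContDiff ℝ (⊤ : ℕ∞) u) (δ : ℝ) : ContDiff ℝ (⊤ : ℕ∞) (tq u δ) := by
  have := pd_contDiff hu
  unfold tq; fun_prop

lemma abs_pd_le_sqrt_tq {δ : ℝ} (hδ : 0 < δ) (x : E n) (i : Fin n) :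
    |pd u i x| ≤ √(tq u δ x) := by
  refine (abs_pd_le u x i).trans ?_
  rw [norm_gradient]
  exact Real.sqrt_le_sqrt (by unfold tq; linarith)

/-- The `i`-th component of the regularised field `M(r)/r² · ∇u` with `r² = |∇u|² + δ`. -/
def fieldC (M : ℝ → ℝ) (u : E n → ℝ) (δ : ℝ) (i : Fin n) (x : E n) : ℝ :=
  nu M (tq u δ x) * pd u i x

lemma nu_tq_contDiff (hC : ContDiffOn ℝ 1 M (Ioi 0)) (hu : ContDiff ℝ (⊤ : ℕ∞) u)
    {δ : ℝ} (hδ : 0 < δ) : ContDiff ℝ 1 (fun x => nu M (tq u δ x)) :=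
  (nu_contDiffOn hC).comp_contDiff ((tq_contDiff hu δ).of_le (by exact_mod_cast le_top))
    fun x => tq_pos hδ x

lemma fieldC_contDiff (hC : ContDiffOn ℝ 1 M (Ioi 0)) (hu : ContDiff ℝ (⊤ : ℕ∞) u)
    {δ : ℝ} (hδ : 0 < δ) (i : Fin n) : ContDiff ℝ 1 (fieldC M u δ i) :=
  (nu_tq_contDiff hC hu hδ).mul ((pd_contDiff hu i).of_le (by exact_mod_cast le_top))

/-- Each diagonal derivative of the field is at most a constant times `M(r)/r² · |∇⁽²⁾u|`, with a
constant independent of `δ`. -/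
lemma abs_pd_fieldC_le (hM : IsNFunction M) (hC : ContDiffOn ℝ 1 M (Ioi 0))
    {c : ℝ} (hc : 0 < c) (hD : ∀ l > (0:ℝ), M (2 * l) ≤ c * M l)
    (hu : ContDiff ℝ (⊤ : ℕ∞) u) {δ : ℝ} (hδ : 0 < δ) (i : Fin n) (x : E n) :
    |pd (fieldC M u δ i) i x| ≤ (n * (c + 2) + 1) * (nu M (tq u δ x) * hessNormHS u x) := by
  set t := tq u δ x with htdef
  have ht : 0 < t := tq_pos hδ x
  have hdiff : ∀ j, HasFDerivAt (pd u j) (fderiv ℝ (pd u j) x) x := fun j =>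
    ((pd_contDiff hu j).differentiable (by simp) x).hasFDerivAt
  have h1 : HasFDerivAt (tq u δ) (∑ j, (2 * pd u j x) • fderiv ℝ (pd u j) x) x := by
    have := (HasFDerivAt.fun_sum (u := Finset.univ) fun j _ => (hdiff j).pow 2).add_const δ
    have e : tq u δ = fun x => ∑ j, pd u j x ^ 2 + δ := rfl
    rw [e]; simpa using this
  have h2 : HasDerivAt (nu M) (deriv (nu M) t) t :=
    (((nu_contDiffOn hC).differentiableOn one_ne_zero).differentiableAt
      (Ioi_mem_nhds ht)).hasDerivAt
  have h3 := (h2.comp_hasFDerivAt x h1).mul (hdiff i)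
  have h4 : pd (fieldC M u δ i) i x = nu M t * pd (pd u i) i x
      + pd u i x * (deriv (nu M) t * ∑ j, 2 * pd u j x * pd (pd u j) i x) := by
    have e : fieldC M u δ i = (nu M ∘ tq u δ) * pd u i := rfl
    rw [pd, e, h3.fderiv]
    simp [pd, htdef]
  set H := hessNormHS u x
  have hH : 0 ≤ H := hess_nonneg u x
  have hν : 0 ≤ nu M t := nu_nonneg hM ht.le
  have hs : |∑ j, 2 * pd u j x * pd (pd u j) i x| ≤ n * (2 * √t * H) := by
    refine (Finset.abs_sum_le_sum_abs _ _).trans ?_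
    refine (Finset.sum_le_card_nsmul _ _ (2 * √t * H) fun j _ => ?_).trans (by simp)
    rw [abs_mul, abs_mul, abs_two]
    have := abs_pd_le_sqrt_tq (u := u) hδ x j
    have := abs_pd_pd_le hu x i j
    gcongr
  rw [h4]
  calc _ ≤ |nu M t * pd (pd u i) i x|
        + |pd u i x * (deriv (nu M) t * ∑ j, 2 * pd u j x * pd (pd u j) i x)| := abs_add_le _ _
    _ ≤ nu M t * H + √t * ((c / 2 + 1) * (nu M t / t) * (n * (2 * √t * H))) := by
      rw [abs_mul, abs_mul, abs_mul, abs_of_nonneg hν]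
      have a1 := abs_pd_le_sqrt_tq (u := u) hδ x i
      have a2 := abs_pd_pd_le hu x i i
      have a3 := abs_deriv_nu_le hM hC hD ht
      gcongr
    _ = (n * (c + 2) + 1) * (nu M t * H) := by
      have : √t * √t = t := Real.mul_self_sqrt ht.le
      field_simp
      rw [Real.sq_sqrt ht.le]
      ring

lemma young (hP0 : ∀ x ≥ (0:ℝ), 0 ≤ P x) (hQ0 : ∀ x ≥ (0:ℝ), 0 ≤ Q x) (hM : IsNFunction M)
    (hY : ∀ u > (0:ℝ), ∀ v > (0:ℝ), ∀ w > (0:ℝ), M u / u ^ 2 * v * w ≤ M u + P v + Q w)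
    {t v w : ℝ} (ht : 0 < t) (hv : 0 ≤ v) (hw : 0 ≤ w) :
    nu M t * (v * w) ≤ M (√t) + P v + Q w := by
  have h0 : 0 ≤ M (√t) + P v + Q w :=
    add_nonneg (add_nonneg (hM.2.2.2.1 _ (Real.sqrt_nonneg _)) (hP0 v hv)) (hQ0 w hw)
  rcases hv.eq_or_lt with rfl | hv
  · simpa using h0
  rcases hw.eq_or_lt with rfl | hw
  · simpa using h0
  have := hY (√t) (Real.sqrt_pos.2 ht) v hv w hw
  rw [Real.sq_sqrt ht.le] at this
  rw [nu, ← mul_assoc]; exact this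

lemma integrable_P_grad (hΩ : IsOpen Ω) (hφ : LocLipschitzOn Ω φ)
    (hφ' : ∀ᵐ x ∂(volume.restrict Ω), HasGradientAt φ (φ' x) x)
    (hP : IsNFunction P) (hPm : Measurable P) {K : Set (E n)} (hK : IsCompact K) (hKΩ : K ⊆ Ω)
    {w : E n → ℝ} (hw : Continuous w) (hw0 : ∀ x, 0 ≤ w x) (hwK : ∀ x, x ∉ K → w x = 0) :
    Integrable (fun x => P (‖φ' x‖ * w x)) (measOf Ω φ) := by
  obtain ⟨C, hC⟩ := grad_bdd hΩ hφ hφ' hK hKΩ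
  obtain ⟨D, hD⟩ := hK.exists_bound_of_continuousOn hw.continuousOn
  refine integrable_of_bdd hφ hK hKΩ (C := P (C * D)) ?_ ?_ ?_
  · exact (hPm.comp_aemeasurable ((aemeasurable_grad hφ').norm.mul
      hw.aemeasurable)).aestronglyMeasurable
  · filter_upwards [hC] with x hx hxK
    have h1 := mul_nonneg (norm_nonneg (φ' x)) (hw0 x)
    rw [abs_of_nonneg (hP.2.2.2.1 _ h1)]
    apply hP.mono h1
    have h2 := (le_abs_self _).trans (hD x hxK)
    have h3 := hx hxK
    exact mul_le_mul h3 h2 (hw0 x) ((norm_nonneg _).trans h3)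
  · intro x hx
    simp [hwK x hx, hP.2.2.1]

/-- Integration by parts for the regularised field, followed by the Young-type inequality: the
weight `θ` is moved between the two factors so that the `M`-term appears with a small constant. -/
lemma step_delta (hΩ : IsOpen Ω) (hM : IsNFunction M) (hC : ContDiffOn ℝ 1 M (Ioi 0))
    {c : ℝ} (hc : 0 < c) (hD : ∀ l > (0:ℝ), M (2 * l) ≤ c * M l) (hY : CondY M P Q)
    (hP : IsNFunction P) (hQ : IsNFunction Q)
    (hφ : LocLipschitzOn Ω φ)
    (hφ' : ∀ᵐ x ∂(volume.restrict Ω), HasGradientAt φ (φ' x) x)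
    (hu : TestFun Ω u) {δ θ s : ℝ} (hδ : 0 < δ) (hθ : 0 < θ) (hs : 0 < s) :
    ∫ x, nu M (tq u δ x) * ∑ i, pd u i x ^ 2 ∂(measOf Ω φ) ≤
      θ * (1 + n * (n * (c + 2) + 1)) *
          ∫ x, (tsupport u).indicator (fun x => M (√(tq u δ x))) x ∂(measOf Ω φ)
        + θ * ∫ x, P (‖φ' x‖ * (s * ‖gradient u x‖)) ∂(measOf Ω φ)
        + θ * (n * (n * (c + 2) + 1)) * ∫ x, P (s * hessNormHS u x) ∂(measOf Ω φ)
        + θ * (1 + n * (n * (c + 2) + 1)) * ∫ x, Q (|u x| / (s * θ)) ∂(measOf Ω φ) := by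
  obtain ⟨hu1, hu2, hu3⟩ := hu
  obtain ⟨hPm, hQm, hP0, hQ0, -, -, -, -, hYY⟩ := hY
  set μ := measOf Ω φ with hμ
  set K := tsupport u with hKdef
  have hK : IsCompact K := hu2
  set C₁ : ℝ := n * (c + 2) + 1 with hC₁
  have hC₁0 : 0 ≤ C₁ := by positivity
  have huc : Continuous u := hu1.continuous
  have hu0 : ∀ x, x ∉ K → u x = 0 := fun x hx => image_eq_zero_of_notMem_tsupport hx
  have hfc := fun i => fieldC_contDiff hC hu1 hδ i
  have hfcd : ∀ i, Continuous (pd (fieldC M u δ i) i) := fun i =>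
    ((hfc i).continuous_fderiv one_ne_zero).clm_apply continuous_const
  have iA : ∀ i, Integrable (fun x => pd u i x * fieldC M u δ i x) μ := fun i =>
    integrable_of_cont hφ hK hu3 ((pd_contDiff hu1 i).continuous.mul (hfc i).continuous)
      fun x hx => by simp [pd_zero_off hx]
  have iB : ∀ i, Integrable (fun x => u x * pd (fieldC M u δ i) i x) μ := fun i =>
    integrable_of_cont hφ hK hu3 (huc.mul (hfcd i)) fun x hx => by simp [hu0 x hx]
  have iC : ∀ i, Integrable (fun x => u x * fieldC M u δ i x * φ' x i) μ := fun i => by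
    obtain ⟨C, hC⟩ := grad_bdd hΩ hφ hφ' hK hu3
    obtain ⟨D, hD⟩ := hK.exists_bound_of_continuousOn
      (huc.mul (hfc i).continuous).continuousOn
    refine integrable_of_bdd hφ hK hu3 (C := D * C) ?_ ?_ ?_
    · refine (huc.mul (hfc i).continuous).aestronglyMeasurable.mul ?_
      exact ((EuclideanSpace.proj (𝕜 := ℝ) i).continuous.measurable.comp_aemeasurable
        (aemeasurable_grad hφ')).aestronglyMeasurable
    · filter_upwards [hC] with x hx hxK
      rw [abs_mul]
      have h1 := hD x hxK
      have h2 := (PiLp.norm_apply_le (φ' x) i).trans (hx hxK)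
      exact mul_le_mul h1 h2 (abs_nonneg _) ((norm_nonneg _).trans h1)
    · intro x hx; simp [hu0 x hx]
  have iCB : ∀ i, Integrable
      (fun x => u x * fieldC M u δ i x * φ' x i - u x * pd (fieldC M u δ i) i x) μ :=
    fun i => (iC i).sub (iB i)
  have hib : ∀ i, ∫ x, pd u i x * fieldC M u δ i x ∂μ =
      ∫ x, (u x * fieldC M u δ i x * φ' x i - u x * pd (fieldC M u δ i) i x) ∂μ := by
    intro i
    have hud : ContDiff ℝ 1 u := hu1.of_le (by exact_mod_cast le_top)
    have := ibp hΩ hφ hφ' (h := fun x => u x * fieldC M u δ i x) (hud.mul (hfc i))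
      hu2.mul_right ((tsupport_mul_subset_left).trans hu3) (EuclideanSpace.single i 1)
    have e : ∀ x, fderiv ℝ (fun x => u x * fieldC M u δ i x) x (EuclideanSpace.single i 1)
        = pd u i x * fieldC M u δ i x + u x * pd (fieldC M u δ i) i x := fun x => by
      rw [fderiv_fun_mul (hud.differentiable one_ne_zero x)
        ((hfc i).differentiable one_ne_zero x)]
      simp [pd]; ring
    have e2 : ∀ x, inner ℝ (φ' x) (EuclideanSpace.single i (1:ℝ)) = φ' x i := fun x => by
      rw [EuclideanSpace.inner_single_right]; simp
    simp_rw [e, e2] at this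
    rw [integral_add (iA i) (iB i)] at this
    rw [integral_sub (iC i) (iB i)]
    linarith
  have hlhs : ∫ x, nu M (tq u δ x) * ∑ i, pd u i x ^ 2 ∂μ =
      ∫ x, ∑ i, (u x * fieldC M u δ i x * φ' x i - u x * pd (fieldC M u δ i) i x) ∂μ := by
    rw [integral_finsetSum _ fun i _ => iCB i]
    simp_rw [← hib]
    rw [← integral_finsetSum _ fun i _ => iA i]
    congr 1; funext x
    rw [Finset.mul_sum]
    refine Finset.sum_congr rfl fun i _ => ?_
    rw [fieldC]; ring
  have tqc : Continuous (tq u δ) := (tq_contDiff hu1 δ).continuous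
  have i1 : Integrable (K.indicator (fun x => M (√(tq u δ x)))) μ :=
    integrable_indicator hφ hK hu3
      (hM.continuous_comp tqc.sqrt fun x => Real.sqrt_nonneg _)
  have i2 : Integrable (fun x => P (‖φ' x‖ * (s * ‖gradient u x‖))) μ :=
    integrable_P_grad hΩ hφ hφ' hP hPm hK hu3
      (continuous_const.mul (continuous_norm_gradient hu1)) (fun x => by positivity)
      fun x hx => by simp [norm_gradient_zero_off hx]
  have i3 : Integrable (fun x => P (s * hessNormHS u x)) μ :=
    integrable_of_cont hφ hK hu3
      (hP.continuous_comp (continuous_const.mul (continuous_hess hu1))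
        fun x => mul_nonneg hs.le (hess_nonneg u x))
      fun x hx => by simp [hess_zero_off hu1 hx, hP.2.2.1]
  have i4 : Integrable (fun x => Q (|u x| / (s * θ))) μ :=
    integrable_of_cont hφ hK hu3
      (hQ.continuous_comp (huc.abs.div_const _) fun x => by positivity)
      fun x hx => by simp [hu0 x hx, hQ.2.2.1]
  set B₁ : ℝ := θ * (1 + n * C₁)
  set B₂ : ℝ := θ * (n * C₁)
  have j1 := i1.const_mul B₁
  have j2 := i2.const_mul θ
  have j3 := i3.const_mul B₂
  have j4 := i4.const_mul B₁
  have j12 : Integrable (fun x => B₁ * K.indicator (fun x => M (√(tq u δ x))) x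
      + θ * P (‖φ' x‖ * (s * ‖gradient u x‖))) μ := j1.add j2
  have j123 : Integrable (fun x => B₁ * K.indicator (fun x => M (√(tq u δ x))) x
      + θ * P (‖φ' x‖ * (s * ‖gradient u x‖)) + B₂ * P (s * hessNormHS u x)) μ := j12.add j3
  rw [hlhs, ← integral_const_mul, ← integral_const_mul, ← integral_const_mul,
    ← integral_const_mul, ← integral_add j1 j2, ← integral_add j12 j3, ← integral_add j123 j4]
  refine integral_mono (integrable_finsetSum _ fun i _ => iCB i) (j123.add j4)
    fun x => ?_
  by_cases hx : x ∈ K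
  swap
  · simp [hu0 x hx, indicator_of_notMem hx, norm_gradient_zero_off hx, hess_zero_off hu1 hx,
      hP.2.2.1, hQ.2.2.1]
  simp only [indicator_of_mem hx]
  set t := tq u δ x with ht
  have ht0 : 0 < t := tq_pos hδ x
  have hν : 0 ≤ nu M t := nu_nonneg hM ht0.le
  set H := hessNormHS u x
  have hH : 0 ≤ H := hess_nonneg u x
  have hin : |∑ i, pd u i x * φ' x i| ≤ ‖gradient u x‖ * ‖φ' x‖ := by
    have := abs_real_inner_le_norm (gradient u x) (φ' x)
    rw [PiLp.inner_apply] at this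
    simpa [gradient_apply, mul_comm] using this
  have y1 := young hP0 hQ0 hM hYY ht0 (v := ‖φ' x‖ * (s * ‖gradient u x‖))
    (w := |u x| / (s * θ)) (by positivity) (by positivity)
  have y2 := young hP0 hQ0 hM hYY ht0 (v := s * H)
    (w := |u x| / (s * θ)) (by positivity) (by positivity)
  have z1 : θ * (nu M t * (‖φ' x‖ * (s * ‖gradient u x‖) * (|u x| / (s * θ))))
      = |u x| * nu M t * (‖gradient u x‖ * ‖φ' x‖) := by field_simp
  have z2 : θ * (nu M t * (s * H * (|u x| / (s * θ)))) = |u x| * (nu M t * H) := by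
    field_simp
  have b1 : ∑ i, u x * fieldC M u δ i x * φ' x i
      ≤ |u x| * nu M t * (‖gradient u x‖ * ‖φ' x‖) := by
    have : ∑ i, u x * fieldC M u δ i x * φ' x i = u x * nu M t * ∑ i, pd u i x * φ' x i := by
      rw [Finset.mul_sum]
      refine Finset.sum_congr rfl fun i _ => ?_
      rw [fieldC]; ring
    rw [this]
    refine (le_abs_self _).trans ?_
    rw [abs_mul, abs_mul, abs_of_nonneg hν]
    gcongr
  have b2 : -∑ i, u x * pd (fieldC M u δ i) i x ≤ n * C₁ * (|u x| * (nu M t * H)) := by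
    refine (neg_le_abs _).trans ((Finset.abs_sum_le_sum_abs _ _).trans ?_)
    refine (Finset.sum_le_card_nsmul _ _ (|u x| * (C₁ * (nu M t * H))) fun i _ => ?_).trans ?_
    · rw [abs_mul]
      have := abs_pd_fieldC_le hM hC hc hD hu1 hδ i x
      gcongr
    · simp; apply le_of_eq; ring
  rw [Finset.sum_sub_distrib]
  have w1 := mul_le_mul_of_nonneg_left y1 hθ.le
  have w2 := mul_le_mul_of_nonneg_left
    (mul_le_mul_of_nonneg_left y2 hθ.le) (by positivity : 0 ≤ n * C₁)
  rw [z1] at w1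
  rw [z2] at w2
  simp only [B₁, B₂]
  linarith

/-- The inequality of `step_delta` in the limit `δ → 0`, by dominated convergence. -/
lemma step_limit (hΩ : IsOpen Ω) (hM : IsNFunction M) (hC : ContDiffOn ℝ 1 M (Ioi 0))
    {c : ℝ} (hc : 0 < c) (hD : ∀ l > (0:ℝ), M (2 * l) ≤ c * M l) (hY : CondY M P Q)
    (hP : IsNFunction P) (hQ : IsNFunction Q)
    (hφ : LocLipschitzOn Ω φ)
    (hφ' : ∀ᵐ x ∂(volume.restrict Ω), HasGradientAt φ (φ' x) x)
    (hu : TestFun Ω u) {θ s : ℝ} (hθ : 0 < θ) (hs : 0 < s) :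
    ∫ x, M ‖gradient u x‖ ∂(measOf Ω φ) ≤
      θ * (1 + n * (n * (c + 2) + 1)) * ∫ x, M ‖gradient u x‖ ∂(measOf Ω φ)
        + θ * ∫ x, P (‖φ' x‖ * (s * ‖gradient u x‖)) ∂(measOf Ω φ)
        + θ * (n * (n * (c + 2) + 1)) * ∫ x, P (s * hessNormHS u x) ∂(measOf Ω φ)
        + θ * (1 + n * (n * (c + 2) + 1)) * ∫ x, Q (|u x| / (s * θ)) ∂(measOf Ω φ) := by
  have hst := fun δ hδ => step_delta hΩ hM hC hc hD hY hP hQ hφ hφ' hu (δ := δ) hδ hθ hs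
  obtain ⟨hu1, hu2, hu3⟩ := hu
  set μ := measOf Ω φ with hμ
  set K := tsupport u with hKdef
  have hK : IsCompact K := hu2
  let d : ℕ → ℝ := fun k => 1 / ((k:ℝ) + 1)
  have hd0 : ∀ k, 0 < d k := fun k => by positivity
  have hd1 : ∀ k, d k ≤ 1 := fun k => by
    rw [div_le_one (by positivity)]; linarith [(Nat.cast_nonneg k : (0:ℝ) ≤ k)]
  have hdt : Tendsto d atTop (nhds 0) := tendsto_one_div_add_atTop_nhds_zero_nat
  have tqc : ∀ δ, Continuous (tq u δ) := fun δ => (tq_contDiff hu1 δ).continuous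
  have cM : ∀ δ, Continuous fun x => M (√(tq u δ x)) := fun δ =>
    hM.continuous_comp (tqc δ).sqrt fun x => Real.sqrt_nonneg _
  have ib : Integrable (K.indicator fun x => M (√(tq u 1 x))) μ :=
    integrable_indicator hφ hK hu3 (cM 1)
  have tle : ∀ k x, √(tq u (d k) x) ≤ √(tq u 1 x) := fun k x =>
    Real.sqrt_le_sqrt (by unfold tq; linarith [hd1 k])
  have ttend : ∀ x, Tendsto (fun k => M (√(tq u (d k) x))) atTop (nhds (M ‖gradient u x‖)) := by
    intro x
    have h1 : Tendsto (fun k => √(tq u (d k) x)) atTop (nhds ‖gradient u x‖) := by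
      rw [norm_gradient]
      refine (Real.continuous_sqrt.tendsto _).comp ?_
      simpa [tq] using (tendsto_const_nhds (x := ∑ i, pd u i x ^ 2)).add hdt
    exact (hM.1 _ (norm_nonneg _)).tendsto.comp
      (tendsto_nhdsWithin_iff.2 ⟨h1, Eventually.of_forall fun k => Real.sqrt_nonneg _⟩)
  have T2 : Tendsto (fun k => ∫ x, K.indicator (fun x => M (√(tq u (d k) x))) x ∂μ) atTop
      (nhds (∫ x, M ‖gradient u x‖ ∂μ)) := by
    refine tendsto_integral_of_dominated_convergence _
      (fun k => (integrable_indicator hφ hK hu3 (cM (d k))).1) ib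
      (fun k => ae_of_all _ fun x => ?_) (ae_of_all _ fun x => ?_)
    · by_cases hx : x ∈ K
      · simp only [indicator_of_mem hx]
        rw [Real.norm_of_nonneg (hM.2.2.2.1 _ (Real.sqrt_nonneg _))]
        exact hM.mono (Real.sqrt_nonneg _) (tle k x)
      · simp [indicator_of_notMem hx]
    · by_cases hx : x ∈ K
      · simp only [indicator_of_mem hx]; exact ttend x
      · simp [indicator_of_notMem hx, norm_gradient_zero_off hx, hM.2.2.1]
  have T1 : Tendsto (fun k => ∫ x, nu M (tq u (d k) x) * ∑ i, pd u i x ^ 2 ∂μ) atTop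
      (nhds (∫ x, M ‖gradient u x‖ ∂μ)) := by
    refine tendsto_integral_of_dominated_convergence _
      (fun k => ?_) ib
      (fun k => ae_of_all _ fun x => ?_) (ae_of_all _ fun x => ?_)
    · have h1 := (nu_tq_contDiff hC hu1 (hd0 k)).continuous
      have h2 := fun i => (pd_contDiff hu1 i).continuous
      exact (h1.mul (by fun_prop)).aestronglyMeasurable
    · by_cases hx : x ∈ K
      · simp only [indicator_of_mem hx]
        have ht := tq_pos (u := u) (hd0 k) x
        rw [Real.norm_of_nonneg (mul_nonneg (nu_nonneg hM ht.le) (by positivity))]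
        refine le_trans ?_ (hM.mono (Real.sqrt_nonneg _) (tle k x))
        calc _ ≤ nu M (tq u (d k) x) * tq u (d k) x := by
              gcongr
              · exact nu_nonneg hM ht.le
              · unfold tq; linarith [hd0 k]
          _ = _ := by rw [nu, div_mul_cancel₀ _ ht.ne']
      · simp [indicator_of_notMem hx, pd_zero_off hx]
    · rcases (norm_nonneg (gradient u x)).eq_or_lt with h | h
      · rw [← h, hM.2.2.1]
        rw [norm_gradient, eq_comm, Real.sqrt_eq_zero (by positivity)] at h
        simp [h]
      · have hq : 0 < ∑ i, pd u i x ^ 2 := by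
          rw [norm_gradient] at h; exact Real.sqrt_pos.1 h
        have h2 : Tendsto (fun k => tq u (d k) x) atTop (nhds (∑ i, pd u i x ^ 2)) := by
          simpa [tq] using (tendsto_const_nhds (x := ∑ i, pd u i x ^ 2)).add hdt
        have := ((ttend x).div h2 hq.ne').mul_const (∑ i, pd u i x ^ 2)
        rwa [div_mul_cancel₀ _ hq.ne'] at this
  exact le_of_tendsto_of_tendsto' T1
    ((((T2.const_mul _).add_const _).add_const _).add_const _) fun k => hst (d k) (hd0 k)

end modular

/-! ### The modular inequality and Luxemburg norms -/

section final
variable {n : ℕ} {Ω : Set (E n)} {φ : E n → ℝ} {φ' : E n → E n} {u : E n → ℝ}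
  {M P Q : ℝ → ℝ}

/-- The Hardy-type inequality, applied to the functions `σ ∂ᵢu`. -/
lemma hardy_step (hΩ : IsOpen Ω) (hM : IsNFunction M) (hPm : Measurable P) (hP : IsNFunction P)
    (hφ : LocLipschitzOn Ω φ)
    (hφ' : ∀ᵐ x ∂(volume.restrict Ω), HasGradientAt φ (φ' x) x)
    {K₁ K₂ A : ℝ} (hK₁ : 0 < K₁) (hK₂ : 0 < K₂) (hA : 0 < A)
    (hH1 : ∀ u : E n → ℝ, TestFun Ω u →
      ∫ x, P (‖φ' x‖ * |u x|) ∂(measOf Ω φ) ≤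
        K₁ * ∫ x, P (A * ‖gradient u x‖) ∂(measOf Ω φ)
          + K₂ * ∫ x, M |u x| ∂(measOf Ω φ))
    (hu : TestFun Ω u) {σ : ℝ} (hσ : 0 < σ) (hσ1 : σ ≤ 1) :
    ∫ x, P (‖φ' x‖ * (σ / (n + 1) * ‖gradient u x‖)) ∂(measOf Ω φ) ≤
      n * K₁ * ∫ x, P (A * σ * hessNormHS u x) ∂(measOf Ω φ)
        + n * K₂ * ∫ x, M ‖gradient u x‖ ∂(measOf Ω φ) := by
  set μ := measOf Ω φ
  have hu1 := hu.1
  have hK : IsCompact (tsupport u) := hu.2.1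
  have iM : Integrable (fun x => M ‖gradient u x‖) μ :=
    integrable_of_cont hφ hK hu.2.2
      (hM.continuous_comp (continuous_norm_gradient hu1) fun x => norm_nonneg _)
      fun x hx => by simp [norm_gradient_zero_off hx, hM.2.2.1]
  have iP : Integrable (fun x => P (A * σ * hessNormHS u x)) μ :=
    integrable_of_cont hφ hK hu.2.2
      (hP.continuous_comp (continuous_const.mul (continuous_hess hu1))
        fun x => mul_nonneg (by positivity) (hess_nonneg u x))
      fun x hx => by simp [hess_zero_off hu1 hx, hP.2.2.1]
  have iG : ∀ i, Integrable (fun x => P (‖φ' x‖ * |σ * pd u i x|)) μ := fun i =>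
    integrable_P_grad hΩ hφ hφ' hP hPm hK hu.2.2
      (continuous_const.mul (pd_contDiff hu1 i).continuous).abs (fun x => abs_nonneg _)
      fun x hx => by simp [pd_zero_off hx]
  have hi : ∀ i, ∫ x, P (‖φ' x‖ * |σ * pd u i x|) ∂μ ≤
      K₁ * ∫ x, P (A * σ * hessNormHS u x) ∂μ + K₂ * ∫ x, M ‖gradient u x‖ ∂μ := by
    intro i
    refine (hH1 _ ((hu.pd i).const_mul σ)).trans ?_
    gcongr ?_ * ?_ + ?_ * ?_
    · refine integral_mono_of_nonneg (ae_of_all _ fun x => hP.2.2.2.1 _ (by positivity)) iP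
        (ae_of_all _ fun x => ?_)
      simp only
      rw [norm_gradient_const_mul (pd_contDiff hu1 i), abs_of_pos hσ, ← mul_assoc]
      apply hP.mono (by positivity)
      have := norm_gradient_pd_le hu1 x i
      gcongr
    · refine integral_mono_of_nonneg (ae_of_all _ fun x => hM.2.2.2.1 _ (abs_nonneg _)) iM
        (ae_of_all _ fun x => ?_)
      apply hM.mono (abs_nonneg _)
      rw [abs_mul, abs_of_pos hσ]
      have := abs_pd_le u x i
      nlinarith [abs_nonneg (pd u i x)]
  calc _ ≤ ∫ x, ∑ i, P (‖φ' x‖ * |σ * pd u i x|) ∂μ := by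
        refine integral_mono_of_nonneg
          (ae_of_all _ fun x => hP.2.2.2.1 _ (by positivity))
          (integrable_finsetSum _ fun i _ => iG i) (ae_of_all _ fun x => ?_)
        simp only
        have hnn : ∀ i ∈ Finset.univ, 0 ≤ P (‖φ' x‖ * |σ * pd u i x|) := fun i _ =>
          hP.2.2.2.1 _ (by positivity)
        -- The largest partial derivative controls the whole gradient up to the factor `n`.
        rcases isEmpty_or_nonempty (Fin n) with hn | hn
        · simp [norm_gradient, hP.2.2.1]
        · obtain ⟨i, hi⟩ := Finite.exists_max fun i => |pd u i x|
          refine le_trans ?_ (Finset.single_le_sum hnn (Finset.mem_univ i))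
          apply hP.mono (by positivity)
          gcongr
          have h1 : ‖gradient u x‖ ≤ n * |pd u i x| := by
            refine (norm_gradient_le_sum u x).trans ?_
            simpa using Finset.sum_le_card_nsmul Finset.univ _ _ fun j _ => hi j
          rw [abs_mul, abs_of_pos hσ, div_mul_eq_mul_div, div_le_iff₀ (by positivity)]
          have := abs_nonneg (pd u i x)
          nlinarith
    _ = ∑ i, ∫ x, P (‖φ' x‖ * |σ * pd u i x|) ∂μ := integral_finsetSum _ fun i _ => iG i
    _ ≤ ∑ i : Fin n, (K₁ * ∫ x, P (A * σ * hessNormHS u x) ∂μ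
          + K₂ * ∫ x, M ‖gradient u x‖ ∂μ) := Finset.sum_le_sum fun i _ => hi i
    _ = _ := by simp; ring

/-- Modular Gagliardo–Nirenberg inequality with a free parameter `σ ∈ (0, 1]`. -/
lemma modular (hΩ : IsOpen Ω) (hM : CondM M) (hY : CondY M P Q)
    (hP : IsNFunction P) (hQ : IsNFunction Q) (hφ : LocLipschitzOn Ω φ)
    (hφ' : ∀ᵐ x ∂(volume.restrict Ω), HasGradientAt φ (φ' x) x)
    {K₁ K₂ A : ℝ} (hK₁ : 0 < K₁) (hK₂ : 0 < K₂) (hA : 0 < A)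
    (hH1 : ∀ u : E n → ℝ, TestFun Ω u →
      ∫ x, P (‖φ' x‖ * |u x|) ∂(measOf Ω φ) ≤
        K₁ * ∫ x, P (A * ‖gradient u x‖) ∂(measOf Ω φ)
          + K₂ * ∫ x, M |u x| ∂(measOf Ω φ)) :
    ∃ L > (0:ℝ), ∃ B > (0:ℝ), ∀ u, TestFun Ω u → ∀ σ > (0:ℝ), σ ≤ 1 →
      ∫ x, M ‖gradient u x‖ ∂(measOf Ω φ) ≤
        L * (∫ x, P (B * σ * hessNormHS u x) ∂(measOf Ω φ)
          + ∫ x, Q (B / σ * |u x|) ∂(measOf Ω φ)) := by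
  obtain ⟨hMN, hMC, ⟨c, hc, hD⟩, -⟩ := hM
  set C : ℝ := n * (n * (c + 2) + 1) with hCdef
  have hC0 : 0 ≤ C := by positivity
  -- With this `θ` the `M`-terms on the right add up to half of the left-hand side.
  set θ : ℝ := 1 / (2 * (1 + C + n * K₂)) with hθdef
  have hθ : 0 < θ := by positivity
  have hθ2 : θ * (1 + C) + θ * (n * K₂) = 1 / 2 := by rw [hθdef]; field_simp
  set B : ℝ := A + 1 + (n + 1) / θ with hBdef
  have hB : 0 < B := by positivity
  refine ⟨2 * θ * (n * K₁ + 1 + C), by positivity, B, hB, fun u hu σ hσ hσ1 => ?_⟩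
  have hs : 0 < σ / ((n:ℝ) + 1) := by positivity
  have h1 := step_limit hΩ hMN hMC hc hD hY hP hQ hφ hφ' hu hθ hs
  have h2 := hardy_step hΩ hMN hY.1 hP hφ hφ' hK₁ hK₂ hA hH1 hu hσ hσ1
  set μ := measOf Ω φ
  have hu1 := hu.1
  have hK : IsCompact (tsupport u) := hu.2.1
  have iP : Integrable (fun x => P (B * σ * hessNormHS u x)) μ :=
    integrable_of_cont hφ hK hu.2.2
      (hP.continuous_comp (continuous_const.mul (continuous_hess hu1))
        fun x => mul_nonneg (by positivity) (hess_nonneg u x))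
      fun x hx => by simp [hess_zero_off hu1 hx, hP.2.2.1]
  have iQ : Integrable (fun x => Q (B / σ * |u x|)) μ :=
    integrable_of_cont hφ hK hu.2.2
      (hQ.continuous_comp (continuous_const.mul hu1.continuous.abs) fun x => by positivity)
      fun x hx => by simp [image_eq_zero_of_notMem_tsupport hx, hQ.2.2.1]
  have hn0 : (0:ℝ) ≤ n := Nat.cast_nonneg n
  have hdiv : 0 ≤ ((n:ℝ) + 1) / θ := by positivity
  have e1 : ∫ x, P (A * σ * hessNormHS u x) ∂μ ≤ ∫ x, P (B * σ * hessNormHS u x) ∂μ := by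
    refine integral_mono_of_nonneg (ae_of_all _ fun x => hP.2.2.2.1 _
      (mul_nonneg (by positivity) (hess_nonneg u x))) iP (ae_of_all _ fun x => ?_)
    have := hess_nonneg u x
    apply hP.mono (by positivity)
    gcongr
    linarith
  have e2 : ∫ x, P (σ / (n + 1) * hessNormHS u x) ∂μ
      ≤ ∫ x, P (B * σ * hessNormHS u x) ∂μ := by
    refine integral_mono_of_nonneg (ae_of_all _ fun x => hP.2.2.2.1 _
      (mul_nonneg (by positivity) (hess_nonneg u x))) iP (ae_of_all _ fun x => ?_)
    have := hess_nonneg u x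
    apply hP.mono (by positivity)
    gcongr
    have : σ / (n + 1) ≤ σ := div_le_self hσ.le (by linarith)
    nlinarith
  have e3 : ∫ x, Q (|u x| / (σ / (n + 1) * θ)) ∂μ ≤ ∫ x, Q (B / σ * |u x|) ∂μ := by
    refine integral_mono_of_nonneg (ae_of_all _ fun x => hQ.2.2.2.1 _ (by positivity)) iQ
      (ae_of_all _ fun x => ?_)
    apply hQ.mono (by positivity)
    have : |u x| / (σ / (n + 1) * θ) = ((n + 1) / θ) / σ * |u x| := by field_simp
    rw [this]
    gcongr
    linarith
  have p0 : 0 ≤ ∫ x, P (B * σ * hessNormHS u x) ∂μ := integral_nonneg fun x =>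
    hP.2.2.2.1 _ (mul_nonneg (by positivity) (hess_nonneg u x))
  have q0 : 0 ≤ ∫ x, Q (B / σ * |u x|) ∂μ := integral_nonneg fun x =>
    hQ.2.2.2.1 _ (by positivity)
  set I := ∫ x, M ‖gradient u x‖ ∂μ
  set J := ∫ x, P (B * σ * hessNormHS u x) ∂μ
  set R := ∫ x, Q (B / σ * |u x|) ∂μ
  have f1 := mul_le_mul_of_nonneg_left h2 hθ.le
  have f2 := mul_le_mul_of_nonneg_left e1 (by positivity : 0 ≤ θ * (n * K₁))
  have f3 := mul_le_mul_of_nonneg_left e2 (by positivity : 0 ≤ θ * C)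
  have f4 := mul_le_mul_of_nonneg_left e3 (by positivity : 0 ≤ θ * (1 + C))
  have f5 : θ * (1 + C) * I + θ * (n * K₂) * I = I / 2 := by
    rw [← add_mul, hθ2]; ring
  have f6 : 0 ≤ θ * J := by positivity
  have f7 : 0 ≤ θ * (n * K₁) * R := by positivity
  linarith

/-- The infimum defining the Luxemburg norm is over a nonempty set, since
`R(t/K) ≤ R(t)/K` for `K ≥ 1`. -/
lemma lux_nonempty {α : Type*} [MeasurableSpace α] {R : ℝ → ℝ} (hR : IsNFunction R)
    {μ : Measure α} {f : α → ℝ} (hf : Integrable (fun x => R |f x|) μ) :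
    {K : ℝ | 0 < K ∧ ∫ x, R (|f x| / K) ∂μ ≤ 1}.Nonempty := by
  set I := ∫ x, R |f x| ∂μ with hI
  refine ⟨max 1 I, by positivity, ?_⟩
  have h1 : (1:ℝ) ≤ max 1 I := le_max_left _ _
  calc _ ≤ ∫ x, (max 1 I)⁻¹ * R |f x| ∂μ := by
        refine integral_mono_of_nonneg (ae_of_all _ fun x => hR.2.2.2.1 _ (by positivity))
          (hf.const_mul _) (ae_of_all _ fun x => ?_)
        simp only
        rw [div_eq_inv_mul]
        exact hR.smul_le (by positivity) (inv_le_one_of_one_le₀ h1) (abs_nonneg _)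
    _ = (max 1 I)⁻¹ * I := integral_const_mul _ _
    _ ≤ 1 := by
        rw [inv_mul_le_iff₀ (by positivity), mul_one]; exact le_max_right _ _

end final

/-- Theorem 3.5(2): the Hardy-type inequality (H1) implies the Gagliardo–Nirenberg
inequality for Luxemburg norms, with an additional lower-order term. -/
theorem statement4 {n : ℕ} (Ω : Set (E n)) (hΩ : IsOpen Ω)
    (M P Q : ℝ → ℝ) (hM : CondM M) (hY : CondY M P Q)
    (hP : IsNFunction P) (hQ : IsNFunction Q)
    (φ : E n → ℝ) (hφ : LocLipschitzOn Ω φ) (φ' : E n → E n)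
    (hφ' : ∀ᵐ x ∂(volume.restrict Ω), HasGradientAt φ (φ' x) x)
    (K₁ K₂ A : ℝ) (hK₁ : 0 < K₁) (hK₂ : 0 < K₂) (hA : 0 < A)
    (hH1 : ∀ u : E n → ℝ, TestFun Ω u →
      ∫ x, P (‖φ' x‖ * |u x|) ∂(measOf Ω φ) ≤
        K₁ * ∫ x, P (A * ‖gradient u x‖) ∂(measOf Ω φ)
          + K₂ * ∫ x, M |u x| ∂(measOf Ω φ)) :
    ∃ L₁ > (0:ℝ), ∃ L₂ > (0:ℝ), ∀ u : E n → ℝ, TestFun Ω u →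
      luxNorm M (measOf Ω φ) (fun x => ‖gradient u x‖) ≤
        L₁ * Real.sqrt (luxNorm P (measOf Ω φ) (hessNormHS u) *
          luxNorm Q (measOf Ω φ) u)
          + L₂ * luxNorm Q (measOf Ω φ) u := by
  obtain ⟨L, hL, B, hB, hmod⟩ := modular hΩ hM hY hP hQ hφ hφ' hK₁ hK₂ hA hH1
  refine ⟨B * (1 + 2 * L), by positivity, B * (1 + 2 * L), by positivity, fun u hu => ?_⟩
  have hu1 := hu.1
  have hK : IsCompact (tsupport u) := hu.2.1
  have hu0 : ∀ x, x ∉ tsupport u → u x = 0 := fun x hx => image_eq_zero_of_notMem_tsupport hx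
  have hMN := hM.1
  have iP : ∀ a ≥ (0:ℝ), Integrable (fun x => P (|hessNormHS u x| / a)) (measOf Ω φ) :=
    fun a ha => integrable_of_cont hφ hK hu.2.2
      (hP.continuous_comp ((continuous_hess hu1).abs.div_const a) fun x => by positivity)
      fun x hx => by simp [hess_zero_off hu1 hx, hP.2.2.1]
  have iQ : ∀ b ≥ (0:ℝ), Integrable (fun x => Q (|u x| / b)) (measOf Ω φ) :=
    fun b hb => integrable_of_cont hφ hK hu.2.2
      (hQ.continuous_comp (hu1.continuous.abs.div_const b) fun x => by positivity)
      fun x hx => by simp [hu0 x hx, hQ.2.2.1]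
  have iM : ∀ b ≥ (0:ℝ), Integrable (fun x => M (‖gradient u x‖ / b)) (measOf Ω φ) :=
    fun b hb => integrable_of_cont hφ hK hu.2.2
      (hMN.continuous_comp ((continuous_norm_gradient hu1).div_const b) fun x => by positivity)
      fun x hx => by simp [norm_gradient_zero_off hx, hMN.2.2.1]
  set SP := {K : ℝ | 0 < K ∧ ∫ x, P (|hessNormHS u x| / K) ∂(measOf Ω φ) ≤ 1} with hSP
  set SQ := {K : ℝ | 0 < K ∧ ∫ x, Q (|u x| / K) ∂(measOf Ω φ) ≤ 1} with hSQ
  have hSPn : SP.Nonempty := lux_nonempty hP (by simpa using iP 1 zero_le_one)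
  have hSQn : SQ.Nonempty := lux_nonempty hQ (by simpa using iQ 1 zero_le_one)
  have main : ∀ a ∈ SP, ∀ b ∈ SQ, luxNorm M (measOf Ω φ) (fun x => ‖gradient u x‖) ≤
      B * (1 + 2 * L) * √(a * b) + B * (1 + 2 * L) * b := by
    rintro a ⟨ha, hPa⟩ b ⟨hb, hQb⟩
    have hab : 0 < √(a * b) := Real.sqrt_pos.2 (by positivity)
    set T : ℝ := B * (√(a * b) + b) with hT
    have hT0 : 0 < T := by positivity
    -- This `σ` balances the two modulars: both `σ a` and `b / σ` are at most `√(a b) + b`.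
    set σ : ℝ := √b / (√a + √b) with hσ
    have ra : 0 < √a := Real.sqrt_pos.2 ha
    have rb : 0 < √b := Real.sqrt_pos.2 hb
    have hσ0 : 0 < σ := by positivity
    have hσ1 : σ ≤ 1 := by rw [hσ, div_le_one (by positivity)]; linarith
    have sa : √a * √a = a := Real.mul_self_sqrt ha.le
    have sb : √b * √b = b := Real.mul_self_sqrt hb.le
    have sab : √(a * b) = √a * √b := Real.sqrt_mul ha.le b
    have c1 : σ * a ≤ √(a * b) + b := by
      rw [hσ, div_mul_eq_mul_div, div_le_iff₀ (by positivity), sab]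
      nlinarith [mul_pos ra rb, mul_pos (mul_pos ra rb) rb, mul_pos hb ra, mul_pos hb rb]
    have c2 : b / σ ≤ √(a * b) + b := by
      rw [hσ, div_div_eq_mul_div, div_le_iff₀ rb, sab]
      apply le_of_eq; linear_combination (-√a) * sb
    have hm := hmod _ (hu.const_mul T⁻¹) σ hσ0 hσ1
    simp_rw [norm_gradient_const_mul hu1, hess_const_mul hu1, abs_mul,
      abs_of_pos (inv_pos.2 hT0)] at hm
    have d1 : ∫ x, P (B * σ * (T⁻¹ * hessNormHS u x)) ∂(measOf Ω φ) ≤ 1 := by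
      refine le_trans (integral_mono_of_nonneg (ae_of_all _ fun x => hP.2.2.2.1 _
        (mul_nonneg (by positivity) (mul_nonneg (by positivity) (hess_nonneg u x))))
        (iP a ha.le) (ae_of_all _ fun x => ?_)) hPa
      have hh := hess_nonneg u x
      apply hP.mono (by positivity)
      rw [abs_of_nonneg hh, le_div_iff₀ ha]
      calc B * σ * (T⁻¹ * hessNormHS u x) * a = (B * (σ * a)) / T * hessNormHS u x := by
            field_simp
        _ ≤ 1 * hessNormHS u x := by
            gcongr
            rw [div_le_one hT0, hT]
            gcongr
        _ = _ := one_mul _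
    have d2 : ∫ x, Q (B / σ * (T⁻¹ * |u x|)) ∂(measOf Ω φ) ≤ 1 := by
      refine le_trans (integral_mono_of_nonneg (ae_of_all _ fun x => hQ.2.2.2.1 _
        (by positivity)) (iQ b hb.le) (ae_of_all _ fun x => ?_)) hQb
      apply hQ.mono (by positivity)
      rw [le_div_iff₀ hb]
      calc B / σ * (T⁻¹ * |u x|) * b = (B * (b / σ)) / T * |u x| := by
            field_simp
        _ ≤ 1 * |u x| := by
            gcongr
            rw [div_le_one hT0, hT]
            gcongr
        _ = _ := one_mul _
    have hm2 : ∫ x, M (T⁻¹ * ‖gradient u x‖) ∂(measOf Ω φ) ≤ 2 * L := by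
      refine hm.trans ?_
      nlinarith
    have hle : luxNorm M (measOf Ω φ) (fun x => ‖gradient u x‖) ≤ T * (1 + 2 * L) := by
      refine csInf_le ⟨0, fun y hy => hy.1.le⟩ ⟨by positivity, ?_⟩
      have l1 : (1:ℝ) ≤ 1 + 2 * L := by linarith
      calc _ ≤ ∫ x, (1 + 2 * L)⁻¹ * M (T⁻¹ * ‖gradient u x‖) ∂(measOf Ω φ) := by
            refine integral_mono_of_nonneg (ae_of_all _ fun x => hMN.2.2.2.1 _ (by positivity))
              (((iM T hT0.le).congr (ae_of_all _ fun x => ?_)).const_mul _)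
              (ae_of_all _ fun x => ?_)
            · simp only [div_eq_inv_mul]
            · simp only
              rw [abs_of_nonneg (norm_nonneg _), div_eq_inv_mul, mul_inv, mul_comm T⁻¹,
                mul_assoc]
              exact hMN.smul_le (by positivity) (inv_le_one_of_one_le₀ l1) (by positivity)
        _ = (1 + 2 * L)⁻¹ * ∫ x, M (T⁻¹ * ‖gradient u x‖) ∂(measOf Ω φ) :=
            integral_const_mul _ _
        _ ≤ 1 := by
            rw [inv_mul_le_iff₀ (by positivity)]; linarith
    refine hle.trans (le_of_eq ?_)
    rw [hT]; ring
  -- The bound passes to the infima by continuity of its right-hand side in `(a, b)`.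
  have hcl : (sInf SP, sInf SQ) ∈ closure (SP ×ˢ SQ) := by
    rw [closure_prod_eq]
    exact ⟨csInf_mem_closure hSPn ⟨0, fun y hy => hy.1.le⟩,
      csInf_mem_closure hSQn ⟨0, fun y hy => hy.1.le⟩⟩
  have hclosed : IsClosed {p : ℝ × ℝ | luxNorm M (measOf Ω φ) (fun x => ‖gradient u x‖) ≤
      B * (1 + 2 * L) * √(p.1 * p.2) + B * (1 + 2 * L) * p.2} :=
    isClosed_le continuous_const (by fun_prop)
  exact closure_minimal (fun p hp => main p.1 hp.1 p.2 hp.2) hclosed hcl
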